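/- arXiv:2004.04550 — 2 statements merged into one kernel-verified Lean document; each statement's English description precedes it below -/
import Mathlib

section
/- Let q be a prime power, let F be a finite field with q elements, fix ε ∈ {1, −1} and an integer d ≥ 3 such that d divides q + ε, and let g be an element of PGL₂(F) of order d. Then the centralizer of g in PGL₂(F) is a cyclic group of order q + ε. -/
/-- `PGL₂(F)`: the quotient of `GL₂(F)` by its center. -/
abbrev PGL2 (F : Type*) [Field F] := GL (Fin 2) F ⧸ Subgroup.center (GL (Fin 2) F)

/-!
Let `A` represent `g`. As `g ^ 2 ≠ 1`, `A` is not scalar and has nonzero trace. Comparing traces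
in `B A B⁻¹ = u A` gives `u = 1`, so the centralizer of `g` comes from the commutant of `A`, which
is the quadratic algebra `K = F[A]`; hence it is isomorphic to `Kˣ / Fˣ`. Every class of `Kˣ / Fˣ`
contains exactly one of `1` and the invertible `x + A`, so the order is `q + 1 - n`, where `n ≤ 2`
is the number of eigenvalues of `A` in `F`. Both `q + 1 - n` and `q + ε` are divisible by `d ≥ 3`
and they differ by at most two, so they agree. In particular `n ≠ 1`, so `A` has nonzero
discriminant, and for any `F`-homomorphism `φ` from `K` to a field, `z ↦ φ z / φ (star z)` embeds
`Kˣ / Fˣ` into the units of that field. A finite group of units of a field is cyclic.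
-/

open QuadraticAlgebra

/-- The image of `Rˣ` in the unit group of an `R`-algebra `K`. -/
def scalarUnits (R K : Type*) [CommRing R] [CommRing K] [Algebra R K] : Subgroup Kˣ :=
  (Units.map (algebraMap R K : R →* K)).range

/-- The projective unit group `Kˣ / Rˣ` of an `R`-algebra `K`. -/
abbrev ProjUnits (R K : Type*) [CommRing R] [CommRing K] [Algebra R K] := Kˣ ⧸ scalarUnits R K

/-- The roots of `X ^ 2 + b X - a`, described as those `x` for which `x + ω` has norm zero in the
algebra `QuadraticAlgebra R a b`, where `ω ^ 2 = a + b ω`. -/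
def normRoots {R : Type*} [CommRing R] (a b : R) : Set R :=
  {x | (⟨x, 1⟩ : QuadraticAlgebra R a b).norm = 0}

section CommRing

variable {R : Type*} [CommRing R] {a b : R}

theorem mem_normRoots_iff {x : R} : x ∈ normRoots a b ↔ x ^ 2 + b * x - a = 0 := by
  simp [normRoots, norm_def, sq]

theorem mem_scalarUnits_iff_im_eq_zero {u : (QuadraticAlgebra R a b)ˣ} :
    u ∈ scalarUnits R (QuadraticAlgebra R a b) ↔ u.val.im = 0 := by
  constructor
  · rintro ⟨r, rfl⟩
    exact algebraMap_im r.val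
  · intro h
    have hnorm : u.val.norm = u.val.re * u.val.re := by simp [norm_def, h]
    have hre : IsUnit u.val.re :=
      isUnit_of_mul_isUnit_left (hnorm ▸ isUnit_iff_norm_isUnit.mp u.isUnit)
    exact ⟨hre.unit, Units.ext (QuadraticAlgebra.ext rfl h.symm)⟩

theorem projUnits_mk_eq_mk_iff {z w : (QuadraticAlgebra R a b)ˣ} :
    (z : ProjUnits R (QuadraticAlgebra R a b)) = w ↔
      z.val.re * w.val.im = z.val.im * w.val.re := by
  have hnorm : z.val.norm • (z⁻¹ * w).val = star z.val * w.val := by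
    rw [Algebra.smul_def, algebraMap_norm_eq_mul_star, Units.val_mul,
      mul_right_comm, ← mul_assoc, mul_right_comm, Units.mul_inv, one_mul, mul_comm]
  have him : z.val.norm * (z⁻¹ * w).val.im =
      z.val.re * w.val.im - z.val.im * w.val.re := by
    rw [← smul_eq_mul, ← im_smul, hnorm]
    simp only [im_mul, re_star, im_star]
    ring
  rw [QuotientGroup.eq, mem_scalarUnits_iff_im_eq_zero, ← sub_eq_zero (b := z.val.im * _), ← him,
    (isUnit_iff_norm_isUnit.mp z.isUnit).mul_right_eq_zero]

theorem omega_sub_star_omega_sq (a b : R) :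
    (ω - star ω : QuadraticAlgebra R a b) ^ 2 = algebraMap R _ (b ^ 2 + 4 * a) := by
  ext <;> simp [sq] <;> ring

theorem normRoots_eq_pair [IsDomain R] {r : R} (hr : r ∈ normRoots a b) :
    normRoots a b = {r, -b - r} := by
  ext x
  rw [mem_normRoots_iff] at hr
  have hfactor : x ^ 2 + b * x - a = (x - r) * (x - (-b - r)) := by linear_combination hr
  rw [mem_normRoots_iff, hfactor, mul_eq_zero, sub_eq_zero, sub_eq_zero]
  rfl

theorem ncard_normRoots_le_two [IsDomain R] (a b : R) : (normRoots a b).ncard ≤ 2 := by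
  obtain h | ⟨r, hr⟩ := (normRoots a b).eq_empty_or_nonempty
  · simp [h]
  · rw [normRoots_eq_pair hr]
    exact (Set.ncard_insert_le r _).trans_eq (by rw [Set.ncard_singleton])

end CommRing

section Field

variable {F : Type*} [Field F] {a b : F}

theorem ncard_normRoots_eq_one (hb : b ≠ 0) (hdisc : b ^ 2 + 4 * a = 0) :
    (normRoots a b).ncard = 1 := by
  have h2 : (2 : F) ≠ 0 := fun h2 ↦ hb <| by
    rw [← sq_eq_zero_iff]
    linear_combination hdisc - 2 * a * h2
  have hroot : -b / 2 ∈ normRoots a b := by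
    rw [mem_normRoots_iff]
    field_simp
    linear_combination -hdisc
  have hdouble : -b - -b / 2 = -b / 2 := by
    field_simp
    ring
  rw [normRoots_eq_pair hroot, hdouble, Set.pair_eq_singleton, Set.ncard_singleton]

theorem isUnit_mk_one_iff {x : F} :
    IsUnit (⟨x, 1⟩ : QuadraticAlgebra F a b) ↔ x ∉ normRoots a b :=
  isUnit_iff_norm_isUnit.trans isUnit_iff_ne_zero

theorem re_div_im_notMem_normRoots (z : (QuadraticAlgebra F a b)ˣ) (him : z.val.im ≠ 0) :
    z.val.re / z.val.im ∉ normRoots a b := by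
  intro h
  rw [mem_normRoots_iff] at h
  field_simp at h
  refine (isUnit_iff_norm_isUnit.mp z.isUnit).ne_zero ?_
  rw [norm_def]
  linear_combination h

/-- The class in `Kˣ / Fˣ`, for `K = QuadraticAlgebra F a b`, of a point of the projective line over
`F` at which the norm form does not vanish: `x` goes to the class of `x + ω` and the point at
infinity `none` to the class of `1`. -/
noncomputable def projUnitsOfPoint (a b : F) :
    Option ↥(normRoots a b)ᶜ → ProjUnits F (QuadraticAlgebra F a b)
  | none => 1
  | some x => (isUnit_mk_one_iff.mpr x.2).unit

theorem bijective_projUnitsOfPoint (a b : F) : (projUnitsOfPoint a b).Bijective := by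
  constructor
  · rintro (_ | x) (_ | y) h
    · rfl
    · simpa [re_one, im_one] using projUnits_mk_eq_mk_iff.mp h
    · simpa [re_one, im_one] using projUnits_mk_eq_mk_iff.mp h
    · exact congrArg some (Subtype.ext (by simpa using projUnits_mk_eq_mk_iff.mp h))
  · intro c
    obtain ⟨z, rfl⟩ := QuotientGroup.mk_surjective c
    by_cases him : z.val.im = 0
    · exact ⟨none, projUnits_mk_eq_mk_iff.mpr (by simp [him, im_one])⟩
    · exact ⟨some ⟨_, re_div_im_notMem_normRoots z him⟩,
        projUnits_mk_eq_mk_iff.mpr (by simp [him])⟩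

theorem card_projUnits_add_ncard_normRoots [Finite F] (a b : F) :
    Nat.card (ProjUnits F (QuadraticAlgebra F a b)) + (normRoots a b).ncard = Nat.card F + 1 := by
  rw [← Nat.card_eq_of_bijective _ (bijective_projUnitsOfPoint a b), Finite.card_option,
    Nat.card_coe_set_eq, add_right_comm, add_comm (normRoots a b)ᶜ.ncard,
    Set.ncard_add_ncard_compl]

theorem algHom_apply_eq_apply_star_iff {L : Type*} [Field L] [Algebra F L]
    (hdisc : b ^ 2 + 4 * a ≠ 0) (φ : QuadraticAlgebra F a b →ₐ[F] L) {z : QuadraticAlgebra F a b} :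
    φ z = φ (star z) ↔ z.im = 0 := by
  have hω : φ (ω - star ω) ≠ 0 := by
    rw [← sq_eq_zero_iff.ne, ← map_pow, omega_sub_star_omega_sq, AlgHom.commutes]
    exact (map_ne_zero _).mpr hdisc
  rw [← sub_eq_zero, ← map_sub, sub_star, map_smul, smul_eq_zero_iff_left hω]

theorem nonempty_algHom_quadraticAlgebra (a b : F) (L : Type*) [Field L] [IsAlgClosed L]
    [Algebra F L] : Nonempty (QuadraticAlgebra F a b →ₐ[F] L) := by
  let p : Polynomial L := .X ^ 2 - .C (algebraMap F L b) * .X - .C (algebraMap F L a)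
  have hdeg : p.degree = 2 := by
    unfold p
    compute_degree!
  obtain ⟨α, hα⟩ := IsAlgClosed.exists_root p (by rw [hdeg]; decide)
  refine ⟨lift ⟨α, ?_⟩⟩
  simp only [p, Polynomial.IsRoot, Polynomial.eval_sub, Polynomial.eval_pow, Polynomial.eval_mul,
    Polynomial.eval_X, Polynomial.eval_C] at hα
  rw [Algebra.smul_def, Algebra.smul_def]
  linear_combination hα

theorem isCyclic_projUnits [Finite F] (hdisc : b ^ 2 + 4 * a ≠ 0) :
    IsCyclic (ProjUnits F (QuadraticAlgebra F a b)) := by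
  let L := AlgebraicClosure F
  obtain ⟨φ⟩ := nonempty_algHom_quadraticAlgebra a b L
  let χ : (QuadraticAlgebra F a b)ˣ →* Lˣ :=
    Units.map (φ : QuadraticAlgebra F a b →* L) /
      Units.map ((φ : QuadraticAlgebra F a b →* L).comp ↑(starRingEnd (QuadraticAlgebra F a b)))
  have hker : scalarUnits F (QuadraticAlgebra F a b) = χ.ker := by
    ext z
    rw [mem_scalarUnits_iff_im_eq_zero, ← algHom_apply_eq_apply_star_iff hdisc φ, MonoidHom.mem_ker,
      MonoidHom.div_apply, div_eq_one, Units.ext_iff]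
    rfl
  have := Module.finite_of_finite F (M := QuadraticAlgebra F a b)
  unfold ProjUnits
  rw [hker]
  exact isCyclic_of_injective_ringHom ((Units.coeHom L).comp (QuotientGroup.kerLift χ))
    (Units.val_injective.comp (QuotientGroup.kerLift_injective χ))

end Field

section Matrix

variable {R : Type*} [CommRing R]

theorem mul_self_eq_neg_det_smul_add_trace_smul (A : Matrix (Fin 2) (Fin 2) R) :
    A * A = (-A.det) • 1 + A.trace • A := by
  nontriviality R
  have hCH := A.aeval_self_charpoly
  simp only [Matrix.charpoly_fin_two, map_add, map_sub, map_mul, Polynomial.aeval_X,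
    Polynomial.aeval_C, Algebra.algebraMap_eq_smul_one, smul_one_mul, sq] at hCH
  rw [← sub_eq_zero, ← hCH]
  module

/-- The homomorphism from `R[X] / (χ_A)`, written as a quadratic algebra, to matrices that sends
the generator `ω` to `A`. -/
def quadraticToMatrix (A : Matrix (Fin 2) (Fin 2) R) :
    QuadraticAlgebra R (-A.det) A.trace →ₐ[R] Matrix (Fin 2) (Fin 2) R :=
  lift ⟨A, mul_self_eq_neg_det_smul_add_trace_smul A⟩

theorem quadraticToMatrix_apply (A : Matrix (Fin 2) (Fin 2) R)
    (z : QuadraticAlgebra R (-A.det) A.trace) :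
    quadraticToMatrix A z = z.re • 1 + z.im • A := rfl

theorem det_quadraticToMatrix (A : Matrix (Fin 2) (Fin 2) R)
    (z : QuadraticAlgebra R (-A.det) A.trace) : (quadraticToMatrix A z).det = z.norm := by
  simp only [quadraticToMatrix_apply, Matrix.det_fin_two, Matrix.trace_fin_two, Matrix.add_apply,
    Matrix.smul_apply, Matrix.one_apply_eq, Matrix.one_apply_ne, ne_eq, zero_ne_one, one_ne_zero,
    not_false_eq_true, smul_eq_mul, mul_one, mul_zero, zero_add, norm_def]
  ring

theorem commute_quadraticToMatrix (A : Matrix (Fin 2) (Fin 2) R)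
    (z : QuadraticAlgebra R (-A.det) A.trace) : Commute A (quadraticToMatrix A z) := by
  rw [quadraticToMatrix_apply]
  exact ((Commute.one_right A).smul_right z.re).add_right ((Commute.refl A).smul_right z.im)

variable {F : Type*} [Field F] {A : Matrix (Fin 2) (Fin 2) F}

theorem quadraticToMatrix_mem_range_scalar_iff (hA : A ∉ Set.range (Matrix.scalar (Fin 2)))
    {z : QuadraticAlgebra F (-A.det) A.trace} :
    quadraticToMatrix A z ∈ Set.range (Matrix.scalar (Fin 2)) ↔ z.im = 0 := by
  simp only [Set.mem_range, Matrix.scalar_apply, ← Matrix.smul_one_eq_diagonal] at hA ⊢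
  rw [quadraticToMatrix_apply]
  constructor
  · rintro ⟨r, hr⟩
    by_contra him
    refine hA ⟨z.im⁻¹ * (r - z.re), ?_⟩
    rw [mul_smul, sub_smul, hr, add_sub_cancel_left, inv_smul_smul₀ him]
  · exact fun h ↦ ⟨z.re, by rw [h, zero_smul, add_zero]⟩

/-- The coordinates of a matrix modulo scalar matrices, in which the commutator of `2 × 2` matrices
becomes, up to signs, the cross product. -/
def offScalar : Matrix (Fin 2) (Fin 2) R →ₗ[R] Fin 3 → R where
  toFun M := ![M 0 1, M 1 0, M 0 0 - M 1 1]
  map_add' M N := by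
    ext i
    fin_cases i <;> simp [add_sub_add_comm]
  map_smul' r M := by
    ext i
    fin_cases i <;> simp [mul_sub]

theorem offScalar_eq_zero_iff {M : Matrix (Fin 2) (Fin 2) R} :
    offScalar M = 0 ↔ M ∈ Set.range (Matrix.scalar (Fin 2)) := by
  constructor
  · intro h
    refine ⟨M 0 0, ?_⟩
    have h01 : M 0 1 = 0 := congrFun h 0
    have h10 : M 1 0 = 0 := congrFun h 1
    have h11 : M 0 0 = M 1 1 := sub_eq_zero.mp (congrFun h 2)
    ext i j
    fin_cases i <;> fin_cases j <;> simp [h01, h10, h11]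
  · rintro ⟨r, rfl⟩
    simp [offScalar]

theorem crossProduct_offScalar_eq_zero {A B : Matrix (Fin 2) (Fin 2) R} (hAB : Commute A B) :
    crossProduct (offScalar A) (offScalar B) = 0 := by
  have h00 := congrFun₂ hAB.eq 0 0
  have h01 := congrFun₂ hAB.eq 0 1
  have h10 := congrFun₂ hAB.eq 1 0
  simp only [Matrix.mul_apply, Fin.sum_univ_two] at h00 h01 h10
  rw [cross_apply]
  ext i
  fin_cases i
  · change A 1 0 * (B 0 0 - B 1 1) - (A 0 0 - A 1 1) * B 1 0 = 0
    linear_combination h10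
  · change (A 0 0 - A 1 1) * B 0 1 - A 0 1 * (B 0 0 - B 1 1) = 0
    linear_combination h01
  · change A 0 1 * B 1 0 - A 1 0 * B 0 1 = 0
    linear_combination h00

theorem exists_quadraticToMatrix_eq_of_commute (hA : A ∉ Set.range (Matrix.scalar (Fin 2)))
    {B : Matrix (Fin 2) (Fin 2) F} (hAB : Commute A B) :
    ∃ z, quadraticToMatrix A z = B := by
  have hdep : ¬LinearIndependent F ![offScalar A, offScalar B] := by
    rw [← crossProduct_ne_zero_iff_linearIndependent, not_not]
    exact crossProduct_offScalar_eq_zero hAB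
  rw [LinearIndependent.pair_iff' (offScalar_eq_zero_iff.not.mpr hA)] at hdep
  push Not at hdep
  obtain ⟨y, hy⟩ := hdep
  obtain ⟨x, hx⟩ : B - y • A ∈ Set.range (Matrix.scalar (Fin 2)) := by
    rw [← offScalar_eq_zero_iff, map_sub, map_smul, hy, sub_self]
  refine ⟨⟨x, y⟩, ?_⟩
  rw [quadraticToMatrix_apply, Matrix.smul_one_eq_diagonal, ← Matrix.scalar_apply, hx,
    sub_add_cancel]

end Matrix

theorem commute_mk_iff_of_trace_ne_zero {R n : Type*} [CommRing R] [IsDomain R] [Fintype n]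
    [DecidableEq n] {A B : GL n R} (htr : A.val.trace ≠ 0) :
    Commute (A : GL n R ⧸ Subgroup.center (GL n R)) B ↔ Commute A B := by
  refine ⟨fun h ↦ ?_, fun h ↦ h.map (QuotientGroup.mk' (Subgroup.center (GL n R)))⟩
  have hmk : ((A : GL n R) : GL n R ⧸ Subgroup.center (GL n R)) = ↑(B * A * B⁻¹) := by
    rw [QuotientGroup.mk_mul, QuotientGroup.mk_mul, QuotientGroup.mk_inv, eq_mul_inv_iff_mul_eq]
    exact h.eq
  rw [QuotientGroup.eq, Matrix.GeneralLinearGroup.mem_center_iff_val_mem_range_scalar] at hmk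
  obtain ⟨u, hu⟩ := hmk
  have hconj : (B * A * B⁻¹).val = u • A.val := by
    rw [← mul_inv_cancel_left A (B * A * B⁻¹), Units.val_mul, ← hu, Matrix.scalar_apply,
      ← Matrix.smul_one_eq_diagonal, mul_smul_one]
  have htrace : u * A.val.trace = A.val.trace := by
    rw [← smul_eq_mul, ← Matrix.trace_smul, ← hconj, Units.val_mul, Units.val_mul,
      Matrix.trace_units_conj]
  rw [(mul_eq_right₀ htr).mp htrace, one_smul, Units.val_inj, mul_inv_eq_iff_eq_mul] at hconj
  exact hconj.symm

namespace PGL2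

variable {F : Type*} [Field F] {A : GL (Fin 2) F}

theorem mk_sq_eq_one_of_trace_eq_zero (htr : A.val.trace = 0) : (A : PGL2 F) ^ 2 = 1 := by
  rw [← QuotientGroup.mk_pow, QuotientGroup.eq_one_iff,
    Matrix.GeneralLinearGroup.mem_center_iff_val_mem_range_scalar]
  refine ⟨-A.val.det, ?_⟩
  rw [Units.val_pow_eq_pow_val, sq, mul_self_eq_neg_det_smul_add_trace_smul, htr, zero_smul,
    add_zero, Matrix.smul_one_eq_diagonal, Matrix.scalar_apply]

/-- The homomorphism `F[A]ˣ → PGL₂(F)`, where `F[A]` is written as a quadratic algebra. -/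
def ofQuadraticUnits (A : GL (Fin 2) F) :
    (QuadraticAlgebra F (-A.val.det) A.val.trace)ˣ →* PGL2 F :=
  (QuotientGroup.mk' _).comp
    (Units.map (quadraticToMatrix A.val : _ →* Matrix (Fin 2) (Fin 2) F))

theorem ker_ofQuadraticUnits (hA : A ∉ Subgroup.center (GL (Fin 2) F)) :
    (ofQuadraticUnits A).ker =
      scalarUnits F (QuadraticAlgebra F (-A.val.det) A.val.trace) := by
  rw [Matrix.GeneralLinearGroup.mem_center_iff_val_mem_range_scalar] at hA
  ext z
  rw [mem_scalarUnits_iff_im_eq_zero, ← quadraticToMatrix_mem_range_scalar_iff hA,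
    MonoidHom.mem_ker]
  exact (QuotientGroup.eq_one_iff _).trans
    Matrix.GeneralLinearGroup.mem_center_iff_val_mem_range_scalar

theorem range_ofQuadraticUnits (hA : A ∉ Subgroup.center (GL (Fin 2) F))
    (htr : A.val.trace ≠ 0) :
    (ofQuadraticUnits A).range = Subgroup.centralizer {(A : PGL2 F)} := by
  rw [Matrix.GeneralLinearGroup.mem_center_iff_val_mem_range_scalar] at hA
  ext c
  obtain ⟨B, rfl⟩ := QuotientGroup.mk_surjective c
  rw [Subgroup.mem_centralizer_singleton_iff, ← commute_iff_eq, Commute.symm_iff]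
  constructor
  · rintro ⟨z, hz⟩
    rw [← hz]
    exact (commute_mk_iff_of_trace_ne_zero htr).mpr
      (Units.ext (commute_quadraticToMatrix A.val z.val))
  · intro h
    have hAB : Commute A B := (commute_mk_iff_of_trace_ne_zero htr).mp h
    obtain ⟨z, hz⟩ := exists_quadraticToMatrix_eq_of_commute hA (hAB.map (Units.coeHom _))
    have hunit : IsUnit z := by
      rw [isUnit_iff_norm_isUnit, ← det_quadraticToMatrix, hz]
      exact B.isUnit.map Matrix.detMonoidHom
    exact ⟨hunit.unit, congrArg (QuotientGroup.mk' _) (Units.ext hz)⟩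

/-- The centralizer of the class of `A` is `F[A]ˣ / Fˣ`, where `F[A]` is written as a quadratic
algebra. -/
noncomputable def centralizerEquiv (hA : A ∉ Subgroup.center (GL (Fin 2) F))
    (htr : A.val.trace ≠ 0) :
    Subgroup.centralizer {(A : PGL2 F)} ≃*
      ProjUnits F (QuadraticAlgebra F (-A.val.det) A.val.trace) :=
  (MulEquiv.subgroupCongr (range_ofQuadraticUnits hA htr)).symm.trans <|
    (QuotientGroup.quotientKerEquivRange (ofQuadraticUnits A)).symm.trans <|
      QuotientGroup.quotientMulEquivOfEq (ker_ofQuadraticUnits hA)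

end PGL2

/-- Let `F` be a finite field with `q` elements (`q` a prime power), `ε = ±1`, `d ≥ 3` with
`d ∣ q + ε`, and `g ∈ PGL₂(F)` of order `d`.  Then the centralizer of `g` in `PGL₂(F)` is
cyclic of order `q + ε`. -/
theorem PGL2_centralizer_cyclic (q : ℕ) (hq : IsPrimePow q)
    (F : Type*) [Field F] [Fintype F] (hF : Fintype.card F = q)
    (ε : ℤ) (hε : ε = 1 ∨ ε = -1) (d : ℕ) (hd : 3 ≤ d) (hdvd : (d : ℤ) ∣ (q : ℤ) + ε)
    (g : PGL2 F) (hg : orderOf g = d) :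
    IsCyclic (Subgroup.centralizer ({g} : Set (PGL2 F))) ∧
    (Nat.card (Subgroup.centralizer ({g} : Set (PGL2 F))) : ℤ) = (q : ℤ) + ε := by
  obtain ⟨A, rfl⟩ := QuotientGroup.mk_surjective g
  have hsq : (A : PGL2 F) ^ 2 ≠ 1 := fun h ↦
    absurd (Nat.le_of_dvd two_pos (orderOf_dvd_of_pow_eq_one h)) (by omega)
  have hA : A ∉ Subgroup.center (GL (Fin 2) F) := fun h ↦
    hsq (by rw [(QuotientGroup.eq_one_iff A).mpr h, one_pow])
  have htr : A.val.trace ≠ 0 := mt PGL2.mk_sq_eq_one_of_trace_eq_zero hsq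
  let e := PGL2.centralizerEquiv hA htr
  have hcount : Nat.card (Subgroup.centralizer ({(A : PGL2 F)} : Set (PGL2 F))) +
      (normRoots (-A.val.det) A.val.trace).ncard = q + 1 := by
    rw [Nat.card_congr e.toEquiv, card_projUnits_add_ncard_normRoots,
      Nat.card_eq_fintype_card, hF]
  have hroots := ncard_normRoots_le_two (-A.val.det) A.val.trace
  have hdvdcard : d ∣ Nat.card (Subgroup.centralizer ({(A : PGL2 F)} : Set (PGL2 F))) :=
    hg ▸ Subgroup.orderOf_dvd_natCard _ (Subgroup.mem_centralizer_singleton_iff.mpr rfl)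
  have hcard : (Nat.card (Subgroup.centralizer ({(A : PGL2 F)} : Set (PGL2 F))) : ℤ) = q + ε := by
    refine (sub_eq_zero.mp (Int.eq_zero_of_abs_lt_dvd
      (dvd_sub hdvd (Int.natCast_dvd_natCast.mpr hdvdcard)) ?_)).symm
    rw [abs_lt]
    omega
  have hdisc : A.val.trace ^ 2 + 4 * -A.val.det ≠ 0 := fun h ↦ by
    have := ncard_normRoots_eq_one htr h
    omega
  exact ⟨e.isCyclic.mpr (isCyclic_projUnits hdisc), hcard⟩
end

section
/- Let q be a prime power, let F be a finite field with q elements, fix ε ∈ {1, −1} and an integer d ≥ 3 such that d divides q + ε, and let g be an element of PGL₂(F) of order d. Then g is a power of an element of order q + ε: there exists h ∈ PGL₂(F) with order of h equal to q + ε such that g lies in the cyclic subgroup generated by h. -/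
/-!
Lift `g` to a non-scalar matrix `A` and put `K = F[X] / (χ)`, where `χ` is the characteristic
polynomial of `A`. The element `g` lies in the image of `Kˣ` in `PGL₂(F)`, which is `Kˣ / Fˣ`.

* If `χ` is irreducible, `K` is a field with `q²` elements and `Kˣ / Fˣ` is cyclic of order `q + 1`.
* If `χ` has two distinct roots, `K ≅ F × F` and `Kˣ / Fˣ ≅ Fˣ` is cyclic of order `q - 1`.
* If `χ` has a double root `c`, then `A - c` is nilpotent and `g ^ q = 1`.

So the order `d` of `g` divides one of `q + 1`, `q - 1`, `q`. These numbers differ by at most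
`2 < d`, so `d` divides only one of them, and `d ∣ q + ε` leaves only the cyclic group of order
`q + ε`.
-/

open Polynomial

theorem exists_orderOf_eq_card_of_isCyclic {G : Type*} [Group G] (H : Subgroup G) [IsCyclic H]
    {g : G} (hg : g ∈ H) : ∃ h : G, orderOf h = Nat.card H ∧ g ∈ Subgroup.zpowers h := by
  obtain ⟨h, rfl⟩ := H.isCyclic_iff_exists_zpowers_eq_top.mp inferInstance
  exact ⟨h, (Nat.card_zpowers h).symm, hg⟩

section ProjUnits

variable {R K n : Type*} [CommRing R] [Fintype n] [DecidableEq n]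

/-- The homomorphism `Kˣ → PGLₙ(R)` induced by a matrix representation of an `R`-algebra `K`. For
a faithful representation its range is a copy of `Kˣ / Rˣ`. -/
def projUnits [Ring K] [Algebra R K] (φ : K →ₐ[R] Matrix n n R) :
    Kˣ →* GL n R ⧸ Subgroup.center (GL n R) :=
  (QuotientGroup.mk' _).comp (Units.map φ)

theorem units_map_comp_units_map_algebraMap [Ring K] [Algebra R K] (φ : K →ₐ[R] Matrix n n R) :
    (Units.map (φ : K →* Matrix n n R)).comp (Units.map (algebraMap R K : R →* K)) =
      Matrix.GeneralLinearGroup.scalar n := by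
  ext1 c
  exact Units.ext (φ.commutes c)

theorem ker_projUnits [Ring K] [Algebra R K] {φ : K →ₐ[R] Matrix n n R}
    (hφ : Function.Injective φ) :
    (projUnits φ).ker = (Units.map (algebraMap R K : R →* K)).range := by
  rw [projUnits, ← MonoidHom.comap_ker, QuotientGroup.ker_mk',
    Matrix.GeneralLinearGroup.center_eq_range_scalar, ← units_map_comp_units_map_algebraMap φ,
    MonoidHom.range_comp]
  exact Subgroup.comap_map_eq_self_of_injective (Units.map_injective hφ) _

theorem card_units_mul_card_range_projUnits [Ring K] [Algebra R K] [FaithfulSMul R K]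
    {φ : K →ₐ[R] Matrix n n R} (hφ : Function.Injective φ) :
    Nat.card Rˣ * Nat.card (projUnits φ).range = Nat.card Kˣ := by
  have hinj : Function.Injective (Units.map (algebraMap R K : R →* K)) :=
    Units.map_injective (FaithfulSMul.algebraMap_injective R K)
  rw [← (projUnits φ).ker.card_mul_index, Subgroup.index_ker, ker_projUnits hφ,
    Nat.card_congr (MonoidHom.ofInjective hinj).toEquiv]

theorem mk_mem_range_projUnits [CommRing K] [IsArtinianRing K] [Algebra R K]
    {φ : K →ₐ[R] Matrix n n R} (hφ : Function.Injective φ) {x : K} {A : GL n R}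
    (hx : φ x = A.val) : (A : GL n R ⧸ Subgroup.center (GL n R)) ∈ (projUnits φ).range := by
  have hreg : x ∈ nonZeroDivisors K := mem_nonZeroDivisors_iff_right.mpr fun y hy ↦ hφ <| by
    rw [map_zero, ← A.isUnit.mul_left_eq_zero, ← hx, ← map_mul, hy, map_zero]
  obtain ⟨u, rfl⟩ := IsArtinianRing.isUnit_of_mem_nonZeroDivisors hreg
  exact ⟨u, congrArg QuotientGroup.mk (Units.ext hx)⟩

theorem projUnits_algebraMap [Ring K] [Algebra R K] (φ : K →ₐ[R] Matrix n n R) (c : Rˣ) :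
    projUnits φ (Units.map (algebraMap R K : R →* K) c) = 1 := by
  rw [projUnits, MonoidHom.comp_apply, ← MonoidHom.comp_apply (Units.map _),
    units_map_comp_units_map_algebraMap, QuotientGroup.mk'_apply, QuotientGroup.eq_one_iff,
    Matrix.GeneralLinearGroup.center_eq_range_scalar]
  exact ⟨c, rfl⟩

theorem isCyclic_range_projUnits_prod [IsCyclic Rˣ] (φ : R × R →ₐ[R] Matrix n n R) :
    IsCyclic (projUnits φ).range := by
  let ι : Rˣ →* (R × R)ˣ := MulEquiv.prodUnits.symm.toMonoidHom.comp (.inl Rˣ Rˣ)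
  have hrange : (projUnits φ).range = ((projUnits φ).comp ι).range := by
    refine le_antisymm ?_ (MonoidHom.range_comp (projUnits φ) ι ▸ Subgroup.map_le_range _ _)
    rintro _ ⟨u, rfl⟩
    obtain ⟨⟨s, t⟩, rfl⟩ := MulEquiv.prodUnits.symm.surjective u
    have hst : MulEquiv.prodUnits.symm (s, t) =
        ι (s / t) * Units.map (algebraMap R (R × R) : R →* R × R) t := by
      apply MulEquiv.prodUnits.injective
      rw [MulEquiv.apply_symm_apply, map_mul]
      change (s, t) = (s / t, 1) * (t, t)
      rw [Prod.mk_mul_mk, div_mul_cancel, one_mul]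
    exact ⟨s / t, by rw [hst, map_mul, projUnits_algebraMap, mul_one]; rfl⟩
  rw [hrange]
  exact isCyclic_of_surjective _ ((projUnits φ).comp ι).rangeRestrict_surjective

end ProjUnits

section Irreducible

variable {F n : Type*} [Field F] [Fintype n] [DecidableEq n]

theorem card_adjoinRoot {p : F[X]} (hp : p ≠ 0) :
    Nat.card (AdjoinRoot p) = Nat.card F ^ p.natDegree := by
  have : Module.Finite F (AdjoinRoot p) := (AdjoinRoot.powerBasis hp).finite
  rw [Module.natCard_eq_pow_finrank (K := F), (AdjoinRoot.powerBasis hp).finrank,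
    AdjoinRoot.powerBasis_dim]

/-- The evaluation of polynomials at a matrix `A`, which factors through `R[X] / (χ)` by the
Cayley–Hamilton theorem. -/
noncomputable def adjoinRootCharpolyHom {R : Type*} [CommRing R] (A : Matrix n n R) :
    AdjoinRoot A.charpoly →ₐ[R] Matrix n n R :=
  Ideal.Quotient.liftₐ _ (aeval A) fun p hp ↦ by
    obtain ⟨r, rfl⟩ := Ideal.mem_span_singleton.mp hp
    rw [map_mul, A.aeval_self_charpoly, zero_mul]

theorem adjoinRootCharpolyHom_root {R : Type*} [CommRing R] (A : Matrix n n R) :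
    adjoinRootCharpolyHom A (AdjoinRoot.root _) = A :=
  aeval_X A

theorem exists_orderOf_eq_geomSum_of_irreducible_charpoly [Finite F] {A : GL n F}
    (hA : Irreducible A.val.charpoly) :
    ∃ h : GL n F ⧸ Subgroup.center (GL n F),
      orderOf h = ∑ i ∈ Finset.range (Fintype.card n), Nat.card F ^ i ∧
        (A : GL n F ⧸ Subgroup.center (GL n F)) ∈ Subgroup.zpowers h := by
  have : Fact (Irreducible A.val.charpoly) := ⟨hA⟩
  have : Nonempty n := by
    rw [← Fintype.card_pos_iff, ← A.val.charpoly_natDegree_eq_dim]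
    exact hA.natDegree_pos
  have : Module.Finite F (AdjoinRoot A.val.charpoly) := A.val.charpoly_monic.finite_adjoinRoot
  have : Finite (AdjoinRoot A.val.charpoly) := Module.finite_of_finite F
  have hφ : Function.Injective (adjoinRootCharpolyHom A.val) :=
    (adjoinRootCharpolyHom A.val).toRingHom.injective
  have : IsCyclic (projUnits (adjoinRootCharpolyHom A.val)).range :=
    isCyclic_of_surjective _ (projUnits _).rangeRestrict_surjective
  obtain ⟨h, hh, hAh⟩ := exists_orderOf_eq_card_of_isCyclic _
    (mk_mem_range_projUnits hφ (adjoinRootCharpolyHom_root A.val))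
  refine ⟨h, ?_, hAh⟩
  have hcard := card_units_mul_card_range_projUnits hφ
  rw [← hh, Nat.card_units, Nat.card_units, card_adjoinRoot hA.ne_zero,
    A.val.charpoly_natDegree_eq_dim] at hcard
  have hq : 1 < Nat.card F := Finite.one_lt_card
  rw [Nat.geomSum_eq hq, ← hcard, Nat.mul_div_cancel_left _ (Nat.sub_pos_of_lt hq)]

end Irreducible

section Split

variable {R F B : Type*} [CommRing R] [Field F] [Ring B] [Algebra R B] [Algebra F B]

/-- The algebra homomorphism `(s, t) ↦ s e + t (1 - e)` attached to an idempotent `e`. A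
diagonalisable element with two eigenvalues is the image of the pair of them. -/
def idempotentProdHom {e : B} (he : IsIdempotentElem e) : R × R →ₐ[R] B :=
  AlgHom.ofLinearMap
    ((LinearMap.toSpanSingleton R B e).coprod (LinearMap.toSpanSingleton R B (1 - e)))
    (by simp)
    (fun x y ↦ by
      simp [mul_add, add_mul, he.eq, he.one_sub.eq, he.mul_one_sub_self, he.one_sub_mul_self,
        mul_smul, smul_comm x.1, smul_comm x.2, -smul_add])

theorem idempotentProdHom_apply {e : B} (he : IsIdempotentElem e) (x : R × R) :
    idempotentProdHom he x = x.1 • e + x.2 • (1 - e) :=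
  rfl

theorem idempotentProdHom_injective [IsDomain R] [Module.IsTorsionFree R B] {e : B}
    (he : IsIdempotentElem e) (he0 : e ≠ 0) (he1 : e ≠ 1) :
    Function.Injective (idempotentProdHom he : R × R →ₐ[R] B) := by
  refine (injective_iff_map_eq_zero _).mpr fun x hx ↦ Prod.ext ?_ ?_
  · have h1 : x.1 • e = 0 := by
      simpa [idempotentProdHom_apply, add_mul, he.eq, he.one_sub_mul_self] using congr($hx * e)
    exact (smul_eq_zero.mp h1).resolve_right he0
  · have h2 : x.2 • (1 - e) = 0 := by
      simpa [idempotentProdHom_apply, add_mul, he.one_sub.eq, he.mul_one_sub_self] using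
        congr($hx * (1 - e))
    exact (smul_eq_zero.mp h2).resolve_right (sub_ne_zero.mpr he1.symm)

theorem exists_injective_prod_algHom {x : B} {a b : F} (hab : a ≠ b)
    (hxa : x ≠ algebraMap F B a) (hxb : x ≠ algebraMap F B b)
    (hx : (x - algebraMap F B a) * (x - algebraMap F B b) = 0) :
    ∃ φ : F × F →ₐ[F] B, Function.Injective φ ∧ φ (a, b) = x := by
  have hsub : a - b ≠ 0 := sub_ne_zero.mpr hab
  set e : B := (a - b)⁻¹ • (x - algebraMap F B b)
  have hxe : (a - b) • e = x - algebraMap F B b := smul_inv_smul₀ hsub _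
  have hxe' : (a - b) • (1 - e) = algebraMap F B a - x := by
    rw [smul_sub, hxe, ← Algebra.algebraMap_eq_smul_one, map_sub, sub_sub_sub_cancel_right]
  have hidem : IsIdempotentElem e := by
    have h0 : (a - b) • (1 - e) * ((a - b) • e) = 0 := by
      rw [hxe, hxe', ← neg_sub, neg_mul, hx, neg_zero]
    rw [smul_mul_smul_comm, smul_eq_zero_iff_right (mul_ne_zero hsub hsub), sub_mul, one_mul,
      sub_eq_zero] at h0
    exact h0.symm
  refine ⟨idempotentProdHom hidem, idempotentProdHom_injective hidem ?_ ?_, ?_⟩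
  · intro h
    rw [h, smul_zero] at hxe
    exact hxb (sub_eq_zero.mp hxe.symm)
  · intro h
    rw [h, sub_self, smul_zero] at hxe'
    exact hxa (sub_eq_zero.mp hxe'.symm).symm
  · calc a • e + b • (1 - e) = (a - b) • e + b • 1 := by module
      _ = x := by rw [hxe, ← Algebra.algebraMap_eq_smul_one, sub_add_cancel]

theorem exists_orderOf_eq_card_sub_one_of_sub_mul_sub_eq_zero {n : Type*} [Fintype n]
    [DecidableEq n] [Finite F] {A : GL n F} {a b : F} (hab : a ≠ b)
    (hAa : A.val ≠ algebraMap F _ a) (hAb : A.val ≠ algebraMap F _ b)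
    (hA : (A.val - algebraMap F _ a) * (A.val - algebraMap F _ b) = 0) :
    ∃ h : GL n F ⧸ Subgroup.center (GL n F), orderOf h = Nat.card F - 1 ∧
      (A : GL n F ⧸ Subgroup.center (GL n F)) ∈ Subgroup.zpowers h := by
  obtain ⟨φ, hφ, hφA⟩ := exists_injective_prod_algHom hab hAa hAb hA
  have := isCyclic_range_projUnits_prod φ
  obtain ⟨h, hh, hAh⟩ := exists_orderOf_eq_card_of_isCyclic _ (mk_mem_range_projUnits hφ hφA)
  refine ⟨h, ?_, hAh⟩
  have hcard := card_units_mul_card_range_projUnits hφ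
  rw [← hh, Nat.card_congr MulEquiv.prodUnits.toEquiv, Nat.card_prod] at hcard
  rw [Nat.eq_of_mul_eq_mul_left Nat.card_pos hcard, Nat.card_units]

end Split

theorem mk_pow_eq_one_of_sub_algebraMap_pow_eq_zero {R n : Type*} [CommRing R] [Fintype n]
    [DecidableEq n] (p k : ℕ) [ExpChar R p] {A : GL n R} {c : R}
    (hA : (A.val - algebraMap R _ c) ^ p ^ k = 0) :
    (A : GL n R ⧸ Subgroup.center (GL n R)) ^ p ^ k = 1 := by
  rw [← QuotientGroup.mk_pow, QuotientGroup.eq_one_iff,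
    Matrix.GeneralLinearGroup.mem_center_iff_val_mem_range_scalar]
  refine ⟨c ^ p ^ k, ?_⟩
  cases isEmpty_or_nonempty n
  · exact Subsingleton.elim _ _
  have : ExpChar (Matrix n n R) p :=
    expChar_of_injective_algebraMap (fun _ _ ↦ Matrix.scalar_inj.mp) p
  rw [sub_pow_expChar_pow_of_commute _ _ (Algebra.commutes c A.val).symm, sub_eq_zero] at hA
  rw [Units.val_pow_eq_pow_val, hA, map_pow]
  rfl

theorem exists_sub_mul_sub_eq_zero_of_not_irreducible_charpoly {R : Type*} [CommRing R]
    [IsDomain R] {A : Matrix (Fin 2) (Fin 2) R} (hA : ¬ Irreducible A.charpoly) :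
    ∃ a b : R, (A - algebraMap R _ a) * (A - algebraMap R _ b) = 0 := by
  have hdeg : A.charpoly.natDegree = 2 := A.charpoly_natDegree_eq_dim
  obtain ⟨a, b, h0, h1⟩ :=
    (A.charpoly_monic.not_irreducible_iff_exists_add_mul_eq_coeff hdeg).mp hA
  refine ⟨-a, -b, ?_⟩
  have hχ : A.charpoly = (X - C (-a)) * (X - C (-b)) := by
    rw [A.charpoly_monic.as_sum, hdeg]
    simp only [Finset.sum_range_succ, h0, h1, Finset.sum_range_zero, map_add, map_mul, map_neg]
    ring
  simpa [hχ, -map_neg] using A.aeval_self_charpoly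

namespace PGL2

variable {F : Type*} [Field F] [Finite F]

theorem pow_card_eq_one_or_mem_zpowers (g : PGL2 F) :
    g ^ Nat.card F = 1 ∨
      (∃ h : PGL2 F, orderOf h = Nat.card F + 1 ∧ g ∈ Subgroup.zpowers h) ∨
      ∃ h : PGL2 F, orderOf h = Nat.card F - 1 ∧ g ∈ Subgroup.zpowers h := by
  obtain ⟨A, rfl⟩ := QuotientGroup.mk_surjective g
  by_cases hirr : Irreducible A.val.charpoly
  · have hsinger := exists_orderOf_eq_geomSum_of_irreducible_charpoly hirr
    simp only [Fintype.card_fin, geom_sum_two] at hsinger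
    exact .inr (.inl hsinger)
  by_cases hsq : ∃ c : F, (A.val - algebraMap F _ c) ^ 2 = 0
  · obtain ⟨c, hc⟩ := hsq
    have := Fintype.ofFinite F
    obtain ⟨p, hp, k, hprime, hcard⟩ := FiniteField.card' F
    have := ExpChar.prime (R := F) hprime
    rw [Nat.card_eq_fintype_card, hcard]
    refine .inl (mk_pow_eq_one_of_sub_algebraMap_pow_eq_zero p k (pow_eq_zero_of_le ?_ hc))
    exact hcard ▸ Fintype.one_lt_card
  · push Not at hsq
    obtain ⟨a, b, hA⟩ := exists_sub_mul_sub_eq_zero_of_not_irreducible_charpoly hirr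
    refine .inr (.inr (exists_orderOf_eq_card_sub_one_of_sub_mul_sub_eq_zero ?_ ?_ ?_ hA))
    · rintro rfl
      exact hsq a (by rw [sq, hA])
    · intro h
      exact hsq a (by rw [h, sub_self, zero_pow two_ne_zero])
    · intro h
      exact hsq b (by rw [h, sub_self, zero_pow two_ne_zero])

end PGL2

/-- Let `F` be a finite field with `q` elements (`q` a prime power), `ε = ±1`, `d ≥ 3` with
`d ∣ q + ε`, and `g ∈ PGL₂(F)` of order `d`.  Then `g` is a power of an element of order
`q + ε`. -/
theorem PGL2_mem_zpowers_of_order (q : ℕ) (hq : IsPrimePow q)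
    (F : Type*) [Field F] [Fintype F] (hF : Fintype.card F = q)
    (ε : ℤ) (hε : ε = 1 ∨ ε = -1) (d : ℕ) (hd : 3 ≤ d) (hdvd : (d : ℤ) ∣ (q : ℤ) + ε)
    (g : PGL2 F) (hg : orderOf g = d) :
    ∃ h : PGL2 F, (orderOf h : ℤ) = (q : ℤ) + ε ∧ g ∈ Subgroup.zpowers h := by
  subst hF hg
  have hshift {δ : ℤ} (hδ : |δ| ≤ 1) (hdvd' : (orderOf g : ℤ) ∣ Fintype.card F + δ) : δ = ε := by
    have hdiff : (orderOf g : ℤ) ∣ δ - ε := by simpa using dvd_sub hdvd' hdvd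
    exact sub_eq_zero.mp (Int.eq_zero_of_abs_lt_dvd hdiff (by grind))
  have hcard_pos : 1 ≤ Fintype.card F := Fintype.card_pos
  have htri := g.pow_card_eq_one_or_mem_zpowers
  rw [Nat.card_eq_fintype_card] at htri
  have hmem {δ : ℤ} {h : PGL2 F} (hδ : |δ| ≤ 1) (hh : (orderOf h : ℤ) = Fintype.card F + δ)
      (hgh : g ∈ Subgroup.zpowers h) :
      ∃ h : PGL2 F, (orderOf h : ℤ) = Fintype.card F + ε ∧ g ∈ Subgroup.zpowers h :=
    ⟨h, hshift hδ (hh ▸ mod_cast orderOf_dvd_of_mem_zpowers hgh) ▸ hh, hgh⟩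
  obtain hpow | ⟨h, hh, hgh⟩ | ⟨h, hh, hgh⟩ := htri
  · have := hshift (δ := 0) (by simp) (by simpa using mod_cast orderOf_dvd_of_pow_eq_one hpow)
    omega
  · exact hmem (δ := 1) (by simp) (by omega) hgh
  · exact hmem (δ := -1) (by simp) (by omega) hgh
end
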